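/- Let a, b be positive integers with a ≤ b. If the quadratic form f^{a,b}_2(x,y,z,w) = a·x² + b·y² + 2·(z² + z·w + w²) represents both 1 and 5 (with x, y, z, w ∈ ℤ), then it represents every nonnegative integer. -/

import Mathlib

/-!
Representing `1` forces `a = 1`, and then representing `5` forces `b ≤ 5`, so five forms
`x² + b y² + 2(z² + zw + w²)` have to be shown universal. All of them contain the ternary form
`x² + 2(y² + yz + z²)`, and the key fact (`ternary_represents`) is that this ternary form represents
every `n > 0` with `n ≡ 1, 2, 3, 6, 7 (mod 8)`. Multiples of `4` are handled by doubling a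
representation of `n / 4`, and for `n ≡ 5 (mod 8)` subtracting a suitable `b y²` lands in one of the
good classes.

The ternary fact is proved by Dirichlet's method for sums of three squares. The matrix
`[[A, B, 1], [B, C, 0], [1, 0, n]]` has determinant `3` when `C = d n - 3` and `A C = d + B²`; its
form represents `n`. Such `A` and `B` exist as soon as `-d` is a square modulo `C`, which is arranged
by taking `C` to be `p`, `2p`, `3p` or `6p` with `p` prime (Dirichlet's theorem on primes in
arithmetic progressions) and by quadratic reciprocity for the Jacobi symbol.

Gauss–Hermite reduction (`reduction`) shows that a positive definite integral ternary form of
determinant `3` is equivalent to `x² + y² + 3z²` or to `x² + 2(y² + yz + z²)`. The two are told apart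
by the norm modulo `8` of a characteristic vector (a vector `w` with `Q(v) ≡ B(v, w) (mod 2)` for
all `v`): it is `5` for the first form and `1` for the second.
-/

/-! ### Ternary forms of determinant three -/

/-- The ternary quadratic form with Gram matrix `[[a, t, s], [t, b, r], [s, r, c]]`. -/
def ternQ (a b c r s t x y z : ℤ) : ℤ :=
  a * x ^ 2 + b * y ^ 2 + c * z ^ 2 + 2 * r * y * z + 2 * s * x * z + 2 * t * x * y

/-- The bilinear form belonging to `ternQ`, so that `ternB v v = ternQ v`. -/
def ternB (a b c r s t x y z u v w : ℤ) : ℤ :=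
  (a * x + t * y + s * z) * u + (t * x + b * y + r * z) * v + (s * x + r * y + c * z) * w

/-- The form `ternQ` is positive definite (the third leading minor being `3`), has determinant `3`,
represents `n`, and has a characteristic vector whose norm is `1` modulo `8`. All of this is
invariant under change of basis. -/
def Good (n a b c r s t : ℤ) : Prop :=
  0 < a ∧ 0 < a * b - t ^ 2 ∧
  a * b * c + 2 * r * s * t - a * r ^ 2 - b * s ^ 2 - c * t ^ 2 = 3 ∧
  (∃ x y z, n = ternQ a b c r s t x y z) ∧
  ∃ u v w, (∀ x y z, 2 ∣ ternQ a b c r s t x y z + ternB a b c r s t x y z u v w) ∧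
    8 ∣ ternQ a b c r s t u v w - 1

/-- Substitution `x ↦ x + k y`. -/
lemma Good.shift_xy {n a b c r s t : ℤ} (h : Good n a b c r s t) (k : ℤ) :
    Good n a (b + 2 * k * t + k ^ 2 * a) c (r + k * s) s (t + k * a) := by
  obtain ⟨ha, hD, hdet, ⟨x, y, z, hn⟩, u, v, w, hchar, hw⟩ := h
  refine ⟨ha, by convert hD using 1; ring, by rw [← hdet]; ring, ⟨x - k * y, y, z, ?_⟩,
    u - k * v, v, w, fun x y z => ?_, ?_⟩
  · rw [hn]; simp only [ternQ]; ring
  · convert hchar (x + k * y) y z using 1; simp only [ternQ, ternB]; ring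
  · convert hw using 1; simp only [ternQ]; ring

/-- Substitution `x ↦ x + k z`. -/
lemma Good.shift_xz {n a b c r s t : ℤ} (h : Good n a b c r s t) (k : ℤ) :
    Good n a b (c + 2 * k * s + k ^ 2 * a) (r + k * t) (s + k * a) t := by
  obtain ⟨ha, hD, hdet, ⟨x, y, z, hn⟩, u, v, w, hchar, hw⟩ := h
  refine ⟨ha, hD, by rw [← hdet]; ring, ⟨x - k * z, y, z, ?_⟩,
    u - k * w, v, w, fun x y z => ?_, ?_⟩
  · rw [hn]; simp only [ternQ]; ring
  · convert hchar (x + k * z) y z using 1; simp only [ternQ, ternB]; ring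
  · convert hw using 1; simp only [ternQ]; ring

/-- Substitution `y ↦ y + k z`. -/
lemma Good.shift_yz {n a b c r s t : ℤ} (h : Good n a b c r s t) (k : ℤ) :
    Good n a b (c + 2 * k * r + k ^ 2 * b) (r + k * b) (s + k * t) t := by
  obtain ⟨ha, hD, hdet, ⟨x, y, z, hn⟩, u, v, w, hchar, hw⟩ := h
  refine ⟨ha, hD, by rw [← hdet]; ring, ⟨x, y - k * z, z, ?_⟩,
    u, v - k * w, w, fun x y z => ?_, ?_⟩
  · rw [hn]; simp only [ternQ]; ring
  · convert hchar x (y + k * z) z using 1; simp only [ternQ, ternB]; ring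
  · convert hw using 1; simp only [ternQ]; ring

lemma Good.swap_xy {n a b c r s t : ℤ} (h : Good n a b c r s t) : Good n b a c s r t := by
  obtain ⟨ha, hD, hdet, ⟨x, y, z, hn⟩, u, v, w, hchar, hw⟩ := h
  refine ⟨?_, by convert hD using 1; ring, by rw [← hdet]; ring, ⟨y, x, z, ?_⟩,
    v, u, w, fun x y z => ?_, ?_⟩
  · by_contra hb
    nlinarith [sq_nonneg t, mul_nonneg ha.le (sub_nonneg.2 (not_lt.1 hb))]
  · rw [hn]; simp only [ternQ]; ring
  · convert hchar y x z using 1; simp only [ternQ, ternB]; ring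
  · convert hw using 1; simp only [ternQ]; ring

/-- The binary form `a Q - (a x + t y + s z)²` in `y, z` has determinant `a det Q`. -/
lemma Good.minor_mul {n a b c r s t : ℤ} (h : Good n a b c r s t) :
    (a * b - t ^ 2) * (a * c - s ^ 2) = 3 * a + (a * r - s * t) ^ 2 := by
  obtain ⟨-, -, hdet, -⟩ := h
  rw [← hdet]; ring

lemma Good.swap_yz {n a b c r s t : ℤ} (h : Good n a b c r s t) : Good n a c b r t s := by
  have hm := h.minor_mul
  obtain ⟨ha, hD, hdet, ⟨x, y, z, hn⟩, u, v, w, hchar, hw⟩ := h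
  refine ⟨ha, ?_, by rw [← hdet]; ring, ⟨x, z, y, ?_⟩,
    u, w, v, fun x y z => ?_, ?_⟩
  · have : 0 < (a * b - t ^ 2) * (a * c - s ^ 2) := by rw [hm]; positivity
    exact (pos_iff_pos_of_mul_pos this).1 hD
  · rw [hn]; simp only [ternQ]; ring
  · convert hchar x z y using 1; simp only [ternQ, ternB]; ring
  · convert hw using 1; simp only [ternQ]; ring

/-- Division with remainder of least absolute value. -/
lemma exists_shift (t : ℤ) {a : ℤ} (ha : 0 < a) :
    ∃ k : ℤ, -a ≤ 2 * (t + k * a) ∧ 2 * (t + k * a) ≤ a := by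
  have h1 := Int.emod_nonneg (2 * t + a) (show 2 * a ≠ 0 by omega)
  have h2 := Int.emod_lt_of_pos (2 * t + a) (show 0 < 2 * a by omega)
  have h3 := Int.emod_add_mul_ediv (2 * t + a) (2 * a)
  refine ⟨-((2 * t + a) / (2 * a)), ?_, ?_⟩ <;> nlinarith

/-- The terminal step of the reduction: a form with reduced coefficients is one of the two forms of
determinant `3`, and the characteristic vector excludes `x² + y² + 3z²`. -/
lemma reduced_case {n a b c r s t : ℤ} (h : Good n a b c r s t)
    (ht1 : -a ≤ 2 * t) (ht2 : 2 * t ≤ a) (hab : a ≤ b)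
    (hE1 : -(a * b - t ^ 2) ≤ 2 * (a * r - s * t)) (hE2 : 2 * (a * r - s * t) ≤ a * b - t ^ 2)
    (hD : a * b - t ^ 2 ≤ a * c - s ^ 2) :
    ∃ x y z : ℤ, n = x ^ 2 + 2 * (y ^ 2 + y * z + z ^ 2) := by
  have hm := h.minor_mul
  have ha := h.1
  have hD0 := h.2.1
  generalize hDD : a * b - t ^ 2 = D at *
  generalize a * c - s ^ 2 = D' at *
  generalize hEE : a * r - s * t = E at *
  have hE : 4 * E ^ 2 ≤ D ^ 2 := by nlinarith
  have hD4 : D ^ 2 ≤ 4 * a := by nlinarith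
  have ht : 4 * t ^ 2 ≤ a ^ 2 := by nlinarith
  have haD : 3 * a ^ 2 ≤ 4 * D := by nlinarith
  have ha1 : a = 1 := by
    by_contra hne
    have ha2 : 2 ≤ a := by omega
    -- `9 a⁴ ≤ 16 D² ≤ 64 a` is incompatible with `a ≥ 2`
    have h1 : (3 * a ^ 2) ^ 2 ≤ (4 * D) ^ 2 := by gcongr
    have h3 : 8 ≤ a ^ 3 := by nlinarith [sq_nonneg a]
    nlinarith
  subst ha1
  have ht0 : t = 0 := by omega
  subst ht0
  have h' := h.shift_xz (-s)
  simp only [mul_zero, add_zero, mul_one, add_neg_cancel] at h'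
  generalize c + 2 * -s * s + (-s) ^ 2 = c' at h'
  have hD2 : D ≤ 2 := by nlinarith
  have hbD : b = D := by rw [← hDD]; ring
  subst hbD
  have hr := h'.minor_mul
  have hr4 : -b ≤ 2 * r ∧ 2 * r ≤ b := by constructor <;> linarith
  obtain ⟨-, -, -, ⟨x, y, z, hn⟩, u, v, w, hchar, hw⟩ := h'
  have hb : b = 1 ∨ b = 2 := by omega
  rcases hb with rfl | rfl
  · exfalso
    have hr0 : r = 0 := by omega
    subst hr0
    have hc : c' = 3 := by linarith
    subst hc
    have h1 := hchar 1 0 0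
    have h2 := hchar 0 1 0
    have h3 := hchar 0 0 1
    simp only [ternQ, ternB] at h1 h2 h3 hw
    obtain ⟨u', rfl⟩ : ∃ u', u = 2 * u' + 1 := ⟨(u - 1) / 2, by omega⟩
    obtain ⟨v', rfl⟩ : ∃ v', v = 2 * v' + 1 := ⟨(v - 1) / 2, by omega⟩
    obtain ⟨w', rfl⟩ : ∃ w', w = 2 * w' + 1 := ⟨(w - 1) / 2, by omega⟩
    obtain ⟨i, hi⟩ := Int.even_mul_succ_self u'
    obtain ⟨j, hj⟩ := Int.even_mul_succ_self v'
    obtain ⟨k, hk⟩ := Int.even_mul_succ_self w'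
    obtain ⟨m, hm⟩ := hw
    have : 8 * i + 8 * j + 24 * k + 4 = 8 * m := by linear_combination hm - 4 * hi - 4 * hj - 12 * hk
    omega
  · have hr3 : r = -1 ∨ r = 0 ∨ r = 1 := by omega
    rcases hr3 with rfl | rfl | rfl
    · have hc : c' = 2 := by linarith
      subst hc
      exact ⟨x, y, -z, by rw [hn]; simp only [ternQ]; ring⟩
    · omega
    · have hc : c' = 2 := by linarith
      subst hc
      exact ⟨x, y, z, by rw [hn]; simp only [ternQ]; ring⟩

/-- Gauss–Hermite reduction, by descent on the pair of leading minors `(a, a b - t²)` ordered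
lexicographically. -/
theorem reduction (n : ℤ) (N M : ℕ) : ∀ a b c r s t : ℤ, Good n a b c r s t → a.toNat = N →
    (a * b - t ^ 2).toNat = M → ∃ x y z : ℤ, n = x ^ 2 + 2 * (y ^ 2 + y * z + z ^ 2) := by
  induction N using Nat.strong_induction_on generalizing M with
  | _ N ihN =>
  induction M using Nat.strong_induction_on with
  | _ M ihM =>
  intro a b c r s t h hN hM
  obtain ⟨k, hk1, hk2⟩ := exists_shift t h.1
  have h' := h.shift_xy k
  have hM' : (a * (b + 2 * k * t + k ^ 2 * a) - (t + k * a) ^ 2).toNat = M := by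
    rw [← hM]; congr 1; ring
  generalize b + 2 * k * t + k ^ 2 * a = b at h' hM'
  generalize t + k * a = t at *
  generalize r + k * s = r at *
  clear hM h
  by_cases hab : a ≤ b
  · obtain ⟨l, hl1, hl2⟩ := exists_shift (a * r - s * t) h'.2.1
    have h'' := h'.shift_yz l
    have hE : a * r - s * t + l * (a * b - t ^ 2) = a * (r + l * b) - (s + l * t) * t := by ring
    rw [hE] at hl1 hl2
    generalize c + 2 * l * r + l ^ 2 * b = c at *
    generalize r + l * b = r at *
    generalize s + l * t = s at *
    by_cases hD : a * b - t ^ 2 ≤ a * c - s ^ 2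
    · exact reduced_case h'' hk1 hk2 hab hl1 hl2 hD
    · have h3 := h''.swap_yz
      have h4 := h3.2.1
      exact ihM _ (by omega) _ _ _ _ _ _ h3 hN rfl
  · have h3 := h'.swap_xy
    have h4 := h3.1
    exact ihN _ (by omega) _ _ _ _ _ _ _ h3 rfl rfl

/-! ### Dirichlet's auxiliary form -/

/-- Dirichlet's auxiliary form with Gram matrix `[[A, B, 1], [B, C, 0], [1, 0, n]]`. The congruence
hypotheses say that `(u, v, w)` is a characteristic vector. -/
lemma represents_of_aux {n d A B C u v w : ℤ} (hd : 0 < d) (hC : 0 < C) (hCn : C = d * n - 3)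
    (hA : A * C = d + B ^ 2) (h1 : 2 ∣ A + (A * u + B * v + w)) (h2 : 2 ∣ C + (B * u + C * v))
    (h3 : 2 ∣ n + (u + n * w)) (h8 : 8 ∣ ternQ A C n 0 1 B u v w - 1) :
    ∃ x y z : ℤ, n = x ^ 2 + 2 * (y ^ 2 + y * z + z ^ 2) := by
  have hA0 : 0 < A := by
    have : 0 < A * C := by rw [hA]; positivity
    exact (pos_iff_pos_of_mul_pos this).2 hC
  refine reduction n _ _ A C n 0 1 B ⟨hA0, by linarith, ?_, ⟨0, 0, 1, by simp [ternQ]⟩,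
    u, v, w, fun x y z => ?_, h8⟩ rfl rfl
  · linear_combination n * hA - hCn
  · obtain ⟨e, he⟩ := h1
    obtain ⟨f, hf⟩ := h2
    obtain ⟨g, hg⟩ := h3
    obtain ⟨i, hi⟩ := Int.even_mul_succ_self (x - 1)
    obtain ⟨j, hj⟩ := Int.even_mul_succ_self (y - 1)
    obtain ⟨k, hk⟩ := Int.even_mul_succ_self (z - 1)
    refine ⟨A * i + C * j + n * k + x * z + B * x * y + x * e + y * f + z * g, ?_⟩
    simp only [ternQ, ternB]
    linear_combination x * he + y * hf + z * hg + A * hi + C * hj + n * hk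

/-- The characteristic vector is `(0, 1, 0)` for even `n` and `(1, 1, 0)` for odd `n`. -/
lemma represents_of_dvd_two_three {n d B : ℤ} (hn : n % 4 = 2 ∨ n % 4 = 3) (hd : 0 < d)
    (hd4 : d % 4 = 1) (hC : 0 < 2 * d * n - 3) (hB : B % 2 = 0)
    (hdvd : 2 * d * n - 3 ∣ B ^ 2 + 2 * d) :
    ∃ x y z : ℤ, n = x ^ 2 + 2 * (y ^ 2 + y * z + z ^ 2) := by
  obtain ⟨A, hA⟩ := hdvd
  obtain ⟨e, rfl⟩ : ∃ e, d = 4 * e + 1 := ⟨d / 4, by omega⟩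
  obtain ⟨f, rfl⟩ : ∃ f, B = 2 * f := ⟨B / 2, by omega⟩
  generalize hCC : 2 * (4 * e + 1) * n - 3 = C at *
  have hC8 : C = 8 * (e * n) + 2 * n - 3 := by rw [← hCC]; ring
  have hAe : 2 ∣ A := by
    have h2 : (2 : ℤ) ∣ C * A := ⟨2 * f ^ 2 + (4 * e + 1), by linear_combination -hA⟩
    exact (Int.prime_two.dvd_mul.1 h2).resolve_left (by omega)
  obtain ⟨g, rfl⟩ := hAe
  rcases hn with hn | hn
  · refine represents_of_aux (d := 2 * (4 * e + 1)) (A := 2 * g) (B := 2 * f) (C := C)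
      (u := 0) (v := 1) (w := 0) (by omega) hC (by linarith) (by linarith)
      (by omega) (by omega) (by omega) ?_
    simp only [ternQ]
    ring_nf
    omega
  · refine represents_of_aux (d := 2 * (4 * e + 1)) (A := 2 * g) (B := 2 * f) (C := C)
      (u := 1) (v := 1) (w := 0) (by omega) hC (by linarith) (by linarith)
      (by omega) (by omega) (by omega) ?_
    have hC3 : C % 8 = 3 := by omega
    have hq : ternQ (2 * g) C n 0 1 (2 * f) 1 1 0 = 2 * g + 4 * f + C := by
      simp only [ternQ]; ring
    rw [hq]
    -- `C (A + 2B + C) = 2d + (B + C)² ≡ 3 (mod 8)`, and `C ≡ 3 (mod 8)`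
    obtain ⟨c, rfl⟩ : ∃ c, C = 8 * c + 3 := ⟨C / 8, by omega⟩
    obtain ⟨i, hi⟩ := Int.even_mul_succ_self (f + 4 * c + 1)
    have key : 3 * (2 * g + 4 * f + (8 * c + 3)) =
        8 * (e + i - c * (2 * g + 4 * f + (8 * c + 3))) + 3 := by
      linear_combination 4 * hi - hA
    omega

/-- The characteristic vector is `(0, 0, 1)`, of norm `n`. -/
lemma represents_of_dvd_one {n d B : ℤ} (hn : n % 8 = 1) (hd : 0 < d)
    (hd8 : d % 8 = 1) (hC : 0 < d * n - 3) (hB : B % 2 = 1)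
    (hdvd : d * n - 3 ∣ B ^ 2 + d) :
    ∃ x y z : ℤ, n = x ^ 2 + 2 * (y ^ 2 + y * z + z ^ 2) := by
  obtain ⟨A, hA⟩ := hdvd
  obtain ⟨e, rfl⟩ : ∃ e, d = 8 * e + 1 := ⟨d / 8, by omega⟩
  obtain ⟨f, rfl⟩ : ∃ f, B = 2 * f + 1 := ⟨B / 2, by omega⟩
  generalize hCC : (8 * e + 1) * n - 3 = C at *
  have hC8 : C = 8 * (e * n) + n - 3 := by rw [← hCC]; ring
  obtain ⟨c, rfl⟩ : ∃ c, C = 8 * c + 6 := ⟨C / 8, by omega⟩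
  have hAo : A % 2 = 1 := by
    have : 6 * A = 2 + 4 * (f ^ 2 + f + 2 * e - 2 * c * A) := by linear_combination -hA
    omega
  refine represents_of_aux (d := 8 * e + 1) (A := A) (B := 2 * f + 1) (C := 8 * c + 6)
      (u := 0) (v := 0) (w := 1) hd hC (by linarith) (by linarith)
      (by omega) (by omega) (by omega) ?_
  simp only [ternQ]
  ring_nf
  omega

/-! ### Quadratic residues and primes in arithmetic progressions -/

open NumberTheorySymbols

lemma jacobi_neg_three {d : ℕ} (hd : d % 4 = 1) : J(-3 | d) = J(d | 3) := by
  have hodd : Odd d := Nat.odd_iff.2 (by omega)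
  have h3 : J((3 : ℕ) | d) = J(d | 3) :=
    jacobiSym.quadratic_reciprocity_one_mod_four' (by decide) hd
  rw [show (-3 : ℤ) = -1 * (3 : ℕ) by norm_num, jacobiSym.mul_left, jacobiSym.at_neg_one hodd,
    ZMod.χ₄_nat_one_mod_four hd, one_mul, h3]

lemma jacobi_neg_one_of_one_mod_four {d : ℕ} (hd : d % 4 = 1) : J(-1 | d) = 1 := by
  rw [jacobiSym.at_neg_one (Nat.odd_iff.2 (by omega)), ZMod.χ₄_nat_one_mod_four hd]

lemma jacobi_neg_two {p : ℕ} (hp : p % 8 = 1 ∨ p % 8 = 3) : J(-2 | p) = 1 := by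
  rw [jacobiSym.at_neg_two (Nat.odd_iff.2 (by omega)), ZMod.χ₈'_nat_eq_if_mod_eight,
    if_neg (by omega), if_pos hp]

lemma jacobi_two {p : ℕ} (hp : p % 8 = 1) : J(2 | p) = 1 := by
  rw [jacobiSym.at_two (Nat.odd_iff.2 (by omega)), ZMod.χ₈_nat_eq_if_mod_eight,
    if_neg (by omega), if_pos (Or.inl hp)]

lemma jacobi_congr {a b : ℤ} {d : ℕ} (h : (d : ℤ) ∣ a - b) : J(a | d) = J(b | d) :=
  jacobiSym.mod_left' (Int.emod_eq_emod_iff_emod_sub_eq_zero.2 (Int.emod_eq_zero_of_dvd h))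

/-- Square roots modulo `p` can be prescribed modulo `6` when `p > 3`. -/
lemma exists_root {p : ℕ} (hp : p.Prime) (hp3 : 3 < p) {d : ℤ} (h : J(-d | p) = 1) (ε : ℤ) :
    ∃ B : ℤ, (p : ℤ) ∣ B ^ 2 + d ∧ (6 : ℤ) ∣ B - ε := by
  have : Fact p.Prime := ⟨hp⟩
  obtain ⟨y, hy⟩ := ZMod.isSquare_of_jacobiSym_eq_one h
  obtain ⟨B, rfl⟩ := ZMod.intCast_surjective y
  have hB : (p : ℤ) ∣ B ^ 2 + d := by
    rw [← ZMod.intCast_zmod_eq_zero_iff_dvd]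
    push_cast at hy ⊢
    linear_combination -hy
  have h2 : p % 2 ≠ 0 := fun h0 => by
    have := (Nat.prime_dvd_prime_iff_eq Nat.prime_two hp).1 (Nat.dvd_of_mod_eq_zero h0)
    omega
  have h3 : p % 3 ≠ 0 := fun h0 => by
    have := (Nat.prime_dvd_prime_iff_eq Nat.prime_three hp).1 (Nat.dvd_of_mod_eq_zero h0)
    omega
  have key : ∀ k : ℤ, (p : ℤ) ∣ (B + p * k) ^ 2 + d := fun k => by
    have : (B + p * k) ^ 2 + d = (B ^ 2 + d) + p * (k * (2 * B + p * k)) := by ring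
    rw [this]
    exact dvd_add hB (dvd_mul_right _ _)
  have h6 : p % 6 = 1 ∨ p % 6 = 5 := by omega
  rcases h6 with h6 | h6
  · refine ⟨_, key (ε - B), ?_⟩
    obtain ⟨j, rfl⟩ : ∃ j, p = 6 * j + 1 := ⟨p / 6, by omega⟩
    exact ⟨j * (ε - B), by push_cast; ring⟩
  · refine ⟨_, key (B - ε), ?_⟩
    obtain ⟨j, rfl⟩ : ∃ j, p = 6 * j + 5 := ⟨p / 6, by omega⟩
    exact ⟨(j + 1) * (B - ε), by push_cast; ring⟩

lemma exists_prime_in_progression (a : ℤ) {q : ℤ} (hq : 0 < q) (h : IsCoprime a q) :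
    ∃ p k : ℕ, p.Prime ∧ 3 < p ∧ (p : ℤ) = a + q * k := by
  lift q to ℕ using hq.le
  obtain ⟨p, hpn, hp, hmod⟩ :=
    Nat.forall_exists_prime_gt_and_zmodEq (a.natAbs + 3) (q := q) (by omega) h
  obtain ⟨k, hk⟩ := hmod.symm.dvd
  have hk0 : 0 ≤ k := by
    by_contra hneg
    have : (q : ℤ) * k ≤ 0 := mul_nonpos_of_nonneg_of_nonpos hq.le (by omega)
    omega
  lift k to ℕ using hk0
  exact ⟨p, k, hp, by omega, by linarith⟩

lemma coprime_twenty_four_mul {x m : ℤ} (h2 : x % 2 = 1) (h3 : x % 3 ≠ 0) (h : IsCoprime x m) :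
    IsCoprime x (24 * m) := by
  have c2 : IsCoprime x 2 := ⟨1, -(x / 2), by omega⟩
  have c3 : IsCoprime x 3 := by
    have : x % 3 = 1 ∨ x % 3 = 2 := by omega
    rcases this with h | h
    · exact ⟨1, -(x / 3), by omega⟩
    · exact ⟨-1, x / 3 + 1, by omega⟩
  have := ((c2.pow_right (n := 3)).mul_right c3).mul_right h
  norm_num at this
  exact this

lemma coprime_three {n : ℤ} (h3 : n % 3 ≠ 0) : IsCoprime 3 n := by
  have : n % 3 = 1 ∨ n % 3 = 2 := by omega
  rcases this with h | h
  · exact ⟨-(n / 3), 1, by omega⟩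
  · exact ⟨n / 3 + 1, -1, by omega⟩

lemma prime_coprime_six {p : ℕ} (hp : p.Prime) (hp3 : 3 < p) : IsCoprime (6 : ℤ) p := by
  have : Nat.Coprime 6 p := by
    rw [Nat.coprime_comm, hp.coprime_iff_not_dvd]
    intro h
    have h1 := Nat.le_of_dvd (by norm_num) h
    interval_cases p <;> revert hp h <;> decide
  exact_mod_cast Nat.isCoprime_iff_coprime.2 this

/-! ### The ternary form -/

/-- Dirichlet's auxiliary form with parameter `2d`, so that `C = 2dn - 3`. If `3 ∤ n` then
`d = 12k + 1` and `C = p`; if `3 ∣ n` then `d = 12k + 9` and `C = 3p`. Reciprocity turns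
`(-2d / p)` into `(-3 / d)`, respectively `(-1 / d)`. -/
lemma represents_two_three {n : ℤ} (hn0 : 0 < n) (hn : n % 4 = 2 ∨ n % 4 = 3) :
    ∃ x y z : ℤ, n = x ^ 2 + 2 * (y ^ 2 + y * z + z ^ 2) := by
  by_cases h3 : n % 3 = 0
  · obtain ⟨m, rfl⟩ : ∃ m, n = 3 * m := ⟨n / 3, by omega⟩
    obtain ⟨p, k, hp, hp3, hpk⟩ := exists_prime_in_progression (18 * m - 1) (q := 24 * m) (by omega)
      (coprime_twenty_four_mul (by omega) (by omega) ⟨-1, 18, by ring⟩)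
    have hpd : (p : ℤ) = 2 * ((12 * k + 9 : ℕ) : ℤ) * m - 1 := by push_cast; linarith
    have hp8 : p % 8 = 1 ∨ p % 8 = 3 := by
      have : (p : ℤ) = 18 * m - 1 + 8 * (3 * m * k) := by linarith
      omega
    have hJ : J(-(2 * ((12 * k + 9 : ℕ) : ℤ)) | p) = 1 := by
      rw [show -(2 * ((12 * k + 9 : ℕ) : ℤ)) = -2 * ((12 * k + 9 : ℕ) : ℤ) by ring,
        jacobiSym.mul_left, jacobi_neg_two hp8,
        jacobiSym.quadratic_reciprocity_one_mod_four (by omega) (Nat.odd_iff.2 (by omega)),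
        jacobi_congr (b := -1) ⟨2 * m, by rw [hpd]; ring⟩,
        jacobi_neg_one_of_one_mod_four (by omega), one_mul]
    obtain ⟨B, hB, hB6⟩ := exists_root hp hp3 hJ 0
    have hC : 2 * ((12 * k + 9 : ℕ) : ℤ) * (3 * m) - 3 = 3 * p := by rw [hpd]; ring
    refine represents_of_dvd_two_three (d := ((12 * k + 9 : ℕ) : ℤ)) (B := B) hn (by positivity)
      (by omega) (by omega) (by omega) ?_
    rw [hC]
    refine IsCoprime.mul_dvd ((prime_coprime_six hp hp3).of_isCoprime_of_dvd_left ⟨2, by norm_num⟩)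
      ?_ hB
    obtain ⟨j, rfl⟩ : ∃ j, B = 3 * j := ⟨B / 3, by omega⟩
    exact ⟨3 * j ^ 2 + 2 * (4 * k + 3), by push_cast; ring⟩
  · obtain ⟨u, v, huv⟩ := coprime_three h3
    obtain ⟨p, k, hp, hp3, hpk⟩ := exists_prime_in_progression (2 * n - 3) (q := 24 * n) (by omega)
      (coprime_twenty_four_mul (by omega) (by omega) ⟨-u, v + 2 * u, by linear_combination huv⟩)
    have hpd : (p : ℤ) = 2 * ((12 * k + 1 : ℕ) : ℤ) * n - 3 := by push_cast; linarith
    have hp8 : p % 8 = 1 ∨ p % 8 = 3 := by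
      have : (p : ℤ) = 2 * n - 3 + 8 * (3 * n * k) := by linarith
      omega
    have hJ : J(-(2 * ((12 * k + 1 : ℕ) : ℤ)) | p) = 1 := by
      rw [show -(2 * ((12 * k + 1 : ℕ) : ℤ)) = -2 * ((12 * k + 1 : ℕ) : ℤ) by ring,
        jacobiSym.mul_left, jacobi_neg_two hp8,
        jacobiSym.quadratic_reciprocity_one_mod_four (by omega) (Nat.odd_iff.2 (by omega)),
        jacobi_congr (b := -3) ⟨2 * n, by rw [hpd]; ring⟩,
        jacobi_neg_three (by omega),
        jacobi_congr (b := 1) ⟨4 * k, by push_cast; ring⟩, jacobiSym.one_left, one_mul]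
    obtain ⟨B, hB, hB6⟩ := exists_root hp hp3 hJ 0
    exact represents_of_dvd_two_three (d := ((12 * k + 1 : ℕ) : ℤ)) (B := B) hn (by positivity)
      (by omega) (by omega) (by omega) (by rwa [← hpd])

/-- Dirichlet's auxiliary form with parameter `d`, so that `C = dn - 3`. If `3 ∤ n` then
`d = 24k + 17` and `C = 2p`; if `3 ∣ n` then `d = 24k + 9` and `C = 6p`. -/
lemma represents_one {n : ℤ} (hn0 : 0 < n) (hn : n % 8 = 1) :
    ∃ x y z : ℤ, n = x ^ 2 + 2 * (y ^ 2 + y * z + z ^ 2) := by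
  by_cases h3 : n % 3 = 0
  · obtain ⟨i, rfl⟩ : ∃ i, n = 3 * (8 * i + 3) := ⟨n / 24, by omega⟩
    obtain ⟨p, k, hp, hp3, hpk⟩ := exists_prime_in_progression (36 * i + 13)
      (q := 12 * (8 * i + 3)) (by omega)
      ((coprime_twenty_four_mul (m := 8 * i + 3) (by omega) (by omega)
        ⟨-2, 9, by ring⟩).of_isCoprime_of_dvd_right ⟨2, by ring⟩)
    have hpd : 2 * (p : ℤ) = ((24 * k + 9 : ℕ) : ℤ) * (8 * i + 3) - 1 := by push_cast; linarith
    have hp4 : p % 4 = 1 := by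
      have : (p : ℤ) = 36 * i + 13 + 4 * (3 * (8 * i + 3) * k) := by linarith
      omega
    have hJ : J(-((24 * k + 9 : ℕ) : ℤ) | p) = 1 := by
      have h2 : J(2 | 24 * k + 9) * J(p | 24 * k + 9) = 1 := by
        rw [← jacobiSym.mul_left, jacobi_congr (b := -1) ⟨8 * i + 3, by rw [hpd]; ring⟩,
          jacobi_neg_one_of_one_mod_four (by omega)]
      rw [jacobi_two (by omega), one_mul] at h2
      rw [← neg_one_mul, jacobiSym.mul_left, jacobi_neg_one_of_one_mod_four hp4,
        jacobiSym.quadratic_reciprocity_one_mod_four (by omega) (Nat.odd_iff.2 (by omega)), h2,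
        one_mul]
    obtain ⟨B, hB, hB6⟩ := exists_root hp hp3 hJ 3
    have hC : ((24 * k + 9 : ℕ) : ℤ) * (3 * (8 * i + 3)) - 3 = 6 * p := by
      linear_combination -3 * hpd
    refine represents_of_dvd_one (d := ((24 * k + 9 : ℕ) : ℤ)) (B := B) hn (by positivity)
      (by omega) (by omega) (by omega) ?_
    rw [hC]
    refine IsCoprime.mul_dvd (prime_coprime_six hp hp3) ?_ hB
    obtain ⟨j, rfl⟩ : ∃ j, B = 6 * j + 3 := ⟨B / 6, by omega⟩
    exact ⟨6 * j ^ 2 + 6 * j + 4 * k + 3, by push_cast; ring⟩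
  · obtain ⟨u, v, huv⟩ := coprime_three h3
    obtain ⟨i, rfl⟩ : ∃ i, n = 8 * i + 1 := ⟨n / 8, by omega⟩
    obtain ⟨p, k, hp, hp3, hpk⟩ := exists_prime_in_progression (68 * i + 7)
      (q := 12 * (8 * i + 1)) (by omega)
      ((coprime_twenty_four_mul (m := 8 * i + 1) (by omega) (by omega)
        ⟨-2 * u, v + 17 * u, by linear_combination huv⟩).of_isCoprime_of_dvd_right ⟨2, by ring⟩)
    have hpd : 2 * (p : ℤ) = ((24 * k + 17 : ℕ) : ℤ) * (8 * i + 1) - 3 := by push_cast; linarith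
    have hp4 : p % 4 = 3 := by
      have : (p : ℤ) = 68 * i + 7 + 4 * (3 * (8 * i + 1) * k) := by linarith
      omega
    have hJ : J(-((24 * k + 17 : ℕ) : ℤ) | p) = 1 := by
      have h2 : J(2 | 24 * k + 17) * J(p | 24 * k + 17) = -1 := by
        rw [← jacobiSym.mul_left, jacobi_congr (b := -3) ⟨8 * i + 1, by rw [hpd]; ring⟩,
          jacobi_neg_three (by omega), jacobi_congr (b := -1) ⟨8 * k + 6, by push_cast; ring⟩,
          jacobiSym.at_neg_one (by decide), ZMod.χ₄_nat_three_mod_four (by norm_num)]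
      rw [jacobi_two (by omega), one_mul] at h2
      rw [← neg_one_mul, jacobiSym.mul_left, jacobiSym.at_neg_one (Nat.odd_iff.2 (by omega)),
        ZMod.χ₄_nat_three_mod_four hp4,
        jacobiSym.quadratic_reciprocity_one_mod_four (by omega) (Nat.odd_iff.2 (by omega)), h2]
      norm_num
    obtain ⟨B, hB, hB6⟩ := exists_root hp hp3 hJ 3
    have hC : ((24 * k + 17 : ℕ) : ℤ) * (8 * i + 1) - 3 = 2 * p := hpd.symm
    refine represents_of_dvd_one (d := ((24 * k + 17 : ℕ) : ℤ)) (B := B) hn (by positivity)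
      (by omega) (by omega) (by omega) ?_
    rw [hC]
    refine IsCoprime.mul_dvd ((prime_coprime_six hp hp3).of_isCoprime_of_dvd_left ⟨3, by norm_num⟩)
      ?_ hB
    obtain ⟨j, rfl⟩ : ∃ j, B = 2 * j + 1 := ⟨B / 2, by omega⟩
    exact ⟨2 * j ^ 2 + 2 * j + 12 * k + 9, by push_cast; ring⟩

/-- The numbers not represented by this form are exactly those of the shape `4ᵏ(8m + 5)`; only `n` not
divisible by `4` are treated here. -/
theorem ternary_represents {n : ℤ} (hn0 : 0 < n) (h4 : n % 4 ≠ 0) (h5 : n % 8 ≠ 5) :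
    ∃ x y z : ℤ, n = x ^ 2 + 2 * (y ^ 2 + y * z + z ^ 2) := by
  by_cases h1 : n % 8 = 1
  · exact represents_one hn0 h1
  · exact represents_two_three hn0 (by omega)

/-! ### The quaternary forms -/

/-- The escalation step: the truants `1` and `5` force `a = 1` and `b ≤ 5`. -/
lemma coefficients {a b : ℤ} (ha : 0 < a) (hab : a ≤ b)
    (h1 : ∃ x y z w : ℤ, 1 = a * x ^ 2 + b * y ^ 2 + 2 * (z ^ 2 + z * w + w ^ 2))
    (h5 : ∃ x y z w : ℤ, 5 = a * x ^ 2 + b * y ^ 2 + 2 * (z ^ 2 + z * w + w ^ 2)) :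
    a = 1 ∧ b ≤ 5 := by
  have hN : ∀ z w : ℤ, 0 ≤ z ^ 2 + z * w + w ^ 2 := fun z w => by
    nlinarith [sq_nonneg (z + w), sq_nonneg z, sq_nonneg w]
  have ha1 : a = 1 := by
    obtain ⟨x, y, z, w, h⟩ := h1
    have := hN z w
    by_contra hne
    have ha2 : 2 ≤ a := by omega
    have hx : x ^ 2 = 0 := by nlinarith [sq_nonneg x, sq_nonneg y]
    have hy : y ^ 2 = 0 := by nlinarith [sq_nonneg x, sq_nonneg y]
    rw [hx, hy] at h
    omega
  refine ⟨ha1, ?_⟩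
  subst ha1
  obtain ⟨x, y, z, w, h⟩ := h5
  by_contra hb
  have hN0 := hN z w
  have hy : y ^ 2 = 0 := by nlinarith [sq_nonneg x, sq_nonneg y]
  rw [hy] at h
  have hx1 : x ≤ 2 := by nlinarith
  have hx2 : -2 ≤ x := by nlinarith
  have hNN : z ^ 2 + z * w + w ^ 2 = 2 := by
    interval_cases x <;> omega
  -- `2` is inert in the Eisenstein integers
  have hw1 : w ≤ 1 := by nlinarith [sq_nonneg (2 * z + w)]
  have hw2 : -1 ≤ w := by nlinarith [sq_nonneg (2 * z + w)]
  have hz1 : z ≤ 1 := by nlinarith [sq_nonneg (2 * w + z)]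
  have hz2 : -1 ≤ z := by nlinarith [sq_nonneg (2 * w + z)]
  interval_cases w <;> interval_cases z <;> omega

theorem universal {b : ℤ} (hb : 0 < b) (hb5 : b ≤ 5) (n : ℕ) :
    ∃ x y z w : ℤ, (n : ℤ) = x ^ 2 + b * y ^ 2 + 2 * (z ^ 2 + z * w + w ^ 2) := by
  induction n using Nat.strong_induction_on with
  | _ n ih =>
  rcases Nat.eq_zero_or_pos n with rfl | hn
  · exact ⟨0, 0, 0, 0, by simp⟩
  by_cases h4 : n % 4 = 0
  · obtain ⟨x, y, z, w, h⟩ := ih (n / 4) (by omega)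
    refine ⟨2 * x, 2 * y, 2 * z, 2 * w, ?_⟩
    have : (n : ℤ) = 4 * ((n / 4 : ℕ) : ℤ) := by omega
    rw [this, h]; ring
  -- it suffices to find `y` with `n - b y²` in the range of `ternary_represents`
  have key : ∀ y : ℤ, 0 < n - b * y ^ 2 → (n - b * y ^ 2) % 4 ≠ 0 → (n - b * y ^ 2) % 8 ≠ 5 →
      ∃ x y z w : ℤ, (n : ℤ) = x ^ 2 + b * y ^ 2 + 2 * (z ^ 2 + z * w + w ^ 2) := by
    intro y h1 h2 h3
    obtain ⟨x, z, w, h⟩ := ternary_represents h1 h2 h3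
    exact ⟨x, y, z, w, by linarith⟩
  by_cases h5 : n % 8 = 5
  · have hb' : b = 1 ∨ b = 2 ∨ b = 3 ∨ b = 4 ∨ b = 5 := by omega
    rcases hb' with rfl | rfl | rfl | rfl | rfl
    · exact key 2 (by omega) (by omega) (by omega)
    · exact key 1 (by omega) (by omega) (by omega)
    · exact key 1 (by omega) (by omega) (by omega)
    · exact key 1 (by omega) (by omega) (by omega)
    · by_cases hn20 : 20 < n
      · exact key 2 (by omega) (by omega) (by omega)
      · have : n = 5 ∨ n = 13 := by omega
        rcases this with rfl | rfl
        · exact ⟨0, 1, 0, 0, by norm_num⟩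
        · exact ⟨0, 1, 2, 0, by norm_num⟩
  · exact key 0 (by omega) (by omega) (by omega)

theorem stmt_10 (a b : ℕ) (ha : 0 < a) (hb : 0 < b) (hab : a ≤ b)
    (h : ∀ n ∈ ({1, 5} : Set ℕ), ∃ x y z w : ℤ,
      (n : ℤ) = a * x ^ 2 + b * y ^ 2 + 2 * (z ^ 2 + z * w + w ^ 2)) :
    ∀ n : ℕ, ∃ x y z w : ℤ,
      (n : ℤ) = a * x ^ 2 + b * y ^ 2 + 2 * (z ^ 2 + z * w + w ^ 2) := by
  obtain ⟨ha1, hb5⟩ := coefficients (a := a) (b := b) (by exact_mod_cast ha)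
    (by exact_mod_cast hab) (by simpa using h 1 (by simp)) (by simpa using h 5 (by simp))
  intro n
  rw [ha1]
  simpa using universal (b := b) (by exact_mod_cast hb) hb5 n
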